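/- arXiv:2003.09201 — 2 statements merged into one kernel-verified Lean document; each statement's English description precedes it below -/
import Mathlib

section
/- Relation between weight classes: let 0 < γ < n, ω a weight, and p(·), q(·), s(·) ∈ 𝒫(ℝⁿ) with 1/q(x) = 1/p(x) − γ/n, s(x) = (1 − γ/n) q(x), and p₊ < n/γ. Then ω ∈ 𝒜_{p(·),q(·)}^γ (i.e., ‖ω χ_Q‖_{q(·)} ‖ω^{-1} χ_Q‖_{p'(·)} ≤ C |Q|^{1−γ/n} for all cubes Q) if and only if ω^{n/(n−γ)} ∈ 𝒜_{s(·)}, i.e., ‖ω^{n/(n−γ)} χ_Q‖_{s(·)} ‖ω^{-n/(n−γ)} χ_Q‖_{s'(·)} ≤ C|Q| for all cubes Q. -/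
open MeasureTheory ENNReal Set

/-- Axis-parallel cubes in `ℝⁿ`. -/
def IsCube {n : ℕ} (Q : Set (Fin n → ℝ)) : Prop :=
  ∃ (c : Fin n → ℝ) (r : ℝ), 0 < r ∧ Q = Set.univ.pi fun i => Set.Icc (c i) (c i + r)

/-- The Luxemburg norm on the variable exponent Lebesgue space. -/
noncomputable def luxNorm {n : ℕ} (q : (Fin n → ℝ) → ℝ) (f : (Fin n → ℝ) → ℝ) : ℝ :=
  sInf {η : ℝ | 0 < η ∧
    ∫⁻ x, ENNReal.ofReal ((|f x| / η) ^ q x) ∂(volume : Measure (Fin n → ℝ)) ≤ 1}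

/-!
Taking powers rescales the Luxemburg norm: `‖|f|^b‖_{r(·)} = ‖f‖_{b r(·)}^b` for `b > 0`. With
`b = n / (n - γ) = (1 - γ / n)⁻¹` the exponents satisfy `q = b s` and `p' = b s'`, the latter
because `1 / p' = 1 - 1 / p = (1 - γ / n) - 1 / q = (1 - γ / n) (1 - 1 / s)`. So the condition on
`ω ^ b` is the `b`-th power of the condition on `ω`: both the product of norms and the bound on it
are raised to the power `b`.
-/

theorem sInf_image_rpow {S : Set ℝ} (hS : ∀ x ∈ S, 0 ≤ x) {b : ℝ} (hb : 0 < b) :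
    sInf ((· ^ b) '' S) = sInf S ^ b := by
  rcases S.eq_empty_or_nonempty with rfl | hne
  · simp [Real.zero_rpow hb.ne']
  · exact (MonotoneOn.map_csInf_of_continuousWithinAt
      (Real.continuous_rpow_const hb.le).continuousWithinAt
      (fun x hx _ _ hxy => Real.rpow_le_rpow (hS x hx) hxy hb.le) hne ⟨0, hS⟩).symm

section LuxNorm

variable {n : ℕ} {b : ℝ}

theorem luxNorm_nonneg (r f : (Fin n → ℝ) → ℝ) : 0 ≤ luxNorm r f :=
  Real.sInf_nonneg fun _ h => h.1.le

theorem luxNorm_abs_rpow (hb : 0 < b) (r f : (Fin n → ℝ) → ℝ) :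
    luxNorm r (fun x => |f x| ^ b) = luxNorm (fun x => b * r x) f ^ b := by
  have modular_eq {η : ℝ} (hη : 0 < η) (x : Fin n → ℝ) :
      (|(|f x| ^ b)| / η ^ b) ^ r x = (|f x| / η) ^ (b * r x) := by
    rw [abs_of_nonneg (by positivity), ← Real.div_rpow (abs_nonneg _) hη.le,
      ← Real.rpow_mul (by positivity)]
  unfold luxNorm
  rw [← sInf_image_rpow (fun _ h => h.1.le) hb]
  congr 1
  ext η
  constructor
  · rintro ⟨hη, hle⟩
    have hroot : 0 < η ^ b⁻¹ := Real.rpow_pos_of_pos hη _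
    have hpow : (η ^ b⁻¹) ^ b = η := Real.rpow_inv_rpow hη.le hb.ne'
    refine ⟨η ^ b⁻¹, ⟨hroot, ?_⟩, hpow⟩
    simpa only [← modular_eq hroot, hpow] using hle
  · rintro ⟨η, ⟨hη, hle⟩, rfl⟩
    exact ⟨Real.rpow_pos_of_pos hη b, by simpa only [modular_eq hη] using hle⟩

theorem luxNorm_indicator_rpow (hb : 0 < b) (r : (Fin n → ℝ) → ℝ) {f : (Fin n → ℝ) → ℝ}
    (hf : ∀ x, 0 ≤ f x) (Q : Set (Fin n → ℝ)) :
    luxNorm r (Q.indicator fun x => f x ^ b) =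
      luxNorm (fun x => b * r x) (Q.indicator f) ^ b := by
  rw [← luxNorm_abs_rpow hb]
  congr 1
  ext x
  by_cases hx : x ∈ Q <;> simp [hx, abs_of_nonneg (hf x), Real.zero_rpow hb.ne']

end LuxNorm

theorem inv_conjExponent {p : ℝ} (hp : p ≠ 0) : p.conjExponent⁻¹ = 1 - 1 / p := by
  rw [Real.conjExponent, inv_div, sub_div, div_self hp]

theorem conjExponent_eq_inv_mul_conjExponent {a p q : ℝ} (ha : a ≠ 0) (hp : p ≠ 0) (hq : q ≠ 0)
    (hpq : 1 / q = 1 / p - (1 - a)) :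
    p.conjExponent = a⁻¹ * (a * q).conjExponent := by
  apply inv_injective
  calc p.conjExponent⁻¹ = a - 1 / q := by rw [inv_conjExponent hp, hpq]; ring
    _ = a * (1 - 1 / (a * q)) := by field_simp
    _ = (a⁻¹ * (a * q).conjExponent)⁻¹ := by
      rw [mul_inv, inv_inv, inv_conjExponent (mul_ne_zero ha hq)]

theorem rpow_le_rpow_mul_rpow_iff {A C V b : ℝ} (hA : 0 ≤ A) (hC : 0 ≤ C) (hV : 0 ≤ V)
    (hb : 0 < b) (θ : ℝ) : A ^ b ≤ C ^ b * V ^ (θ * b) ↔ A ≤ C * V ^ θ := by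
  rw [Real.rpow_mul hV, ← Real.mul_rpow hC (by positivity),
    Real.rpow_le_rpow_iff hA (by positivity) hb]

theorem exists_rpow_le_mul_rpow_iff {ι : Type*} {P : ι → Prop} {A V : ι → ℝ}
    (hA : ∀ i, 0 ≤ A i) (hV : ∀ i, 0 ≤ V i) {b : ℝ} (hb : 0 < b) (θ : ℝ) :
    (∃ C : ℝ, 0 < C ∧ ∀ i, P i → A i ^ b ≤ C * V i ^ (θ * b)) ↔
      ∃ C : ℝ, 0 < C ∧ ∀ i, P i → A i ≤ C * V i ^ θ := by
  constructor
  · rintro ⟨C, hC, hle⟩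
    have hroot : 0 < C ^ b⁻¹ := Real.rpow_pos_of_pos hC _
    refine ⟨C ^ b⁻¹, hroot, fun i hi => ?_⟩
    rw [← rpow_le_rpow_mul_rpow_iff (hA i) hroot.le (hV i) hb, Real.rpow_inv_rpow hC.le hb.ne']
    exact hle i hi
  · rintro ⟨C, hC, hle⟩
    exact ⟨C ^ b, Real.rpow_pos_of_pos hC b, fun i hi =>
      (rpow_le_rpow_mul_rpow_iff (hA i) hC.le (hV i) hb θ).2 (hle i hi)⟩

/-- The Muckenhoupt type condition
`‖ω χ_Q‖_{q(·)} ‖ω⁻¹ χ_Q‖_{p'(·)} ≤ C |Q| ^ θ`, uniformly over all cubes `Q`. The class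
`𝒜_{p(·),q(·)}^γ` of the paper is the case `θ = 1 - γ / n`, and `𝒜_{s(·)}` is the case
`p = q = s`, `θ = 1`. -/
def IsMuckenhoupt {n : ℕ} (θ : ℝ) (p q ω : (Fin n → ℝ) → ℝ) : Prop :=
  ∃ C : ℝ, 0 < C ∧ ∀ Q : Set (Fin n → ℝ), IsCube Q →
    luxNorm q (Q.indicator ω) *
      luxNorm (fun x => (p x).conjExponent) (Q.indicator fun x => (ω x)⁻¹) ≤
    C * (volume Q).toReal ^ θ

theorem isMuckenhoupt_rpow_iff {n : ℕ} {b : ℝ} (hb : 0 < b) (θ : ℝ)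
    {p q r s ω : (Fin n → ℝ) → ℝ} (hω : ∀ x, 0 ≤ ω x) (hq : ∀ x, q x = b * s x)
    (hp : ∀ x, (p x).conjExponent = b * (r x).conjExponent) :
    IsMuckenhoupt (θ * b) r s (fun x => ω x ^ b) ↔ IsMuckenhoupt θ p q ω := by
  have norms_eq (Q : Set (Fin n → ℝ)) :
      luxNorm s (Q.indicator fun x => ω x ^ b) *
        luxNorm (fun x => (r x).conjExponent) (Q.indicator fun x => (ω x ^ b)⁻¹) =
      (luxNorm q (Q.indicator ω) *
        luxNorm (fun x => (p x).conjExponent) (Q.indicator fun x => (ω x)⁻¹)) ^ b := by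
    simp only [← Real.inv_rpow (hω _), luxNorm_indicator_rpow hb _ hω,
      luxNorm_indicator_rpow hb _ fun x => inv_nonneg.2 (hω x), ← hp, ← hq,
      Real.mul_rpow (luxNorm_nonneg _ _) (luxNorm_nonneg _ _)]
  simp only [IsMuckenhoupt, norms_eq]
  exact exists_rpow_le_mul_rpow_iff
    (fun _ => mul_nonneg (luxNorm_nonneg _ _) (luxNorm_nonneg _ _)) (fun _ => toReal_nonneg) hb θ

theorem weight_class_relation_general {n : ℕ} (hn : 0 < n) {γ : ℝ} (hγn : γ < n)
    {p q s ω : (Fin n → ℝ) → ℝ} (hω : ∀ x, 0 < ω x) (hp : ∀ x, 1 < p x) (hq : ∀ x, 0 < q x)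
    (hpq : ∀ x, 1 / q x = 1 / p x - γ / n) (hs : ∀ x, s x = (1 - γ / n) * q x) :
    IsMuckenhoupt (1 - γ / n) p q ω ↔
      IsMuckenhoupt 1 s s (fun x => ω x ^ ((n : ℝ) / (n - γ))) := by
  have hn' : (0 : ℝ) < n := Nat.cast_pos.2 hn
  have ha : 0 < 1 - γ / n := sub_pos.2 ((div_lt_one hn').2 hγn)
  have hb : (n : ℝ) / (n - γ) = (1 - γ / n)⁻¹ := by rw [one_sub_div hn'.ne', inv_div]
  have hqs (x : Fin n → ℝ) : q x = (1 - γ / n)⁻¹ * s x := by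
    rw [hs, inv_mul_cancel_left₀ ha.ne']
  have hps (x : Fin n → ℝ) :
      (p x).conjExponent = (1 - γ / n)⁻¹ * (s x).conjExponent := by
    rw [hs]
    exact conjExponent_eq_inv_mul_conjExponent ha.ne' (zero_lt_one.trans (hp x)).ne' (hq x).ne'
      (by rw [hpq, sub_sub_self])
  rw [hb, ← isMuckenhoupt_rpow_iff (inv_pos.2 ha) _ (fun x => (hω x).le) hqs hps,
    mul_inv_cancel₀ ha.ne']

/-- relation between weight classes: for `0 < γ < n`,
`1/q = 1/p − γ/n`, `s = (1 − γ/n) q`, `p₊ < n/γ`, a weight `ω` satisfies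
`𝒜_{p(·),q(·)}^γ` iff `ω^{n/(n−γ)}` satisfies `𝒜_{s(·)}`. -/
theorem weight_class_relation {n : ℕ} (hn : 0 < n) (γ : ℝ) (hγ0 : 0 < γ) (hγn : γ < n)
    (p q s : (Fin n → ℝ) → ℝ) (ω : (Fin n → ℝ) → ℝ)
    (hω : ∀ x, 0 < ω x) (hωmeas : Measurable ω)
    (hpmeas : Measurable p) (hqmeas : Measurable q)
    (pm pp : ℝ) (hpm : 1 < pm) (hpb : ∀ x, pm ≤ p x ∧ p x ≤ pp)
    (qm qp : ℝ) (hqm : 1 < qm) (hqb : ∀ x, qm ≤ q x ∧ q x ≤ qp)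
    (sm sp : ℝ) (hsm : 1 < sm) (hsb : ∀ x, sm ≤ s x ∧ s x ≤ sp)
    (hpq : ∀ x, 1 / q x = 1 / p x - γ / n)
    (hs : ∀ x, s x = (1 - γ / n) * q x)
    (hpp : pp < n / γ) :
    (∃ C : ℝ, 0 < C ∧ ∀ Q : Set (Fin n → ℝ), IsCube Q →
      luxNorm q (Q.indicator ω) *
        luxNorm (fun x => p x / (p x - 1)) (Q.indicator fun x => (ω x)⁻¹) ≤
      C * (volume Q).toReal ^ (1 - γ / n)) ↔
    (∃ C : ℝ, 0 < C ∧ ∀ Q : Set (Fin n → ℝ), IsCube Q →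
      luxNorm s (Q.indicator fun x => ω x ^ ((n : ℝ) / (n - γ))) *
        luxNorm (fun x => s x / (s x - 1))
          (Q.indicator fun x => (ω x ^ ((n : ℝ) / (n - γ)))⁻¹) ≤
      C * (volume Q).toReal) := by
  simpa only [IsMuckenhoupt, Real.conjExponent, Real.rpow_one] using
    weight_class_relation_general hn hγn hω (fun x => hpm.trans_le (hpb x).1)
      (fun x => zero_lt_one.trans (hqm.trans_le (hqb x).1)) hpq hs
end

section
/- If 0 ≤ γ < n, p(·) ∈ 𝒞^{log}(ℝⁿ) ∩ 𝒫(ℝⁿ) and 1/q(x) = 1/p(x) − γ/n, then the constant weight ω ≡ 1 belongs to 𝒜_{p(·),q(·)}^γ, i.e., there is C such that ‖χ_Q‖_{q(·)} ‖χ_Q‖_{p'(·)} ≤ C |Q|^{1−γ/n} for every cube Q ⊂ ℝⁿ. -/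
open MeasureTheory ENNReal Set

/-!
Write `β = 1 / p'` and `1 / q = s - β` with `s = 1 - γ / n`. It suffices to show
`‖χ_Q‖_{1/β(·)} ≤ K |Q| ^ β_Q` for every log-Hölder function `β`, where `β_Q` is the value of `β` at
a corner of `Q` if `Q` is small and the limit of `β` at infinity if `Q` is large: applied to `β`
and to `s - β`, the two exponents add up to `s`.

On the part of `Q` where `β > 0`, the bound `U ^ β x ≤ η` means `η ^ (-1 / β x) ≤ U⁻¹`, so a
candidate `η` for the norm is tested by comparing `U ^ β x` with `|Q| ^ β_Q`. Local log-Hölder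
continuity does this for small cubes with `U = |Q|`, the decay condition for large cubes with
`U = min |Q| ((1 + ‖x‖) ^ (n + 1))`, whose inverse has bounded integral over `Q`.

Since `p` may exceed `n / γ`, the exponent `q` can be zero or negative. There the integrand
`η ^ (-q x)` grows with `η`, so an admissible `η` may be decreased at the cost of the part
where `q > 0` only. If `1 / q` tends to a negative limit, every admissible `η` is itself at most
a multiple of `|Q| ^ β_Q`, because most of a large cube lies far from the origin.
-/

section LogHolder

variable {E : Type*} [NormedAddCommGroup E]

/-- Global log-Hölder continuity (the class `𝒞^{log}`) with constant `C` and limit `b` at infinity.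
The local condition is imposed on all pairs of points: it only says `0 ≤ C` when `dist x y` is `0`
or at least `1`, as `Real.log 0 = 0`. -/
structure LogHolderWith (C b : ℝ) (β : E → ℝ) : Prop where
  abs_sub_mul_neg_log_dist_le (x y : E) : |β x - β y| * -Real.log (dist x y) ≤ C
  abs_sub_mul_log_le (x : E) : |β x - b| * Real.log (Real.exp 1 + ‖x‖) ≤ C

lemma one_le_log_exp_one_add {t : ℝ} (ht : 0 ≤ t) : 1 ≤ Real.log (Real.exp 1 + t) := by
  rw [Real.le_log_iff_exp_le (by positivity)]
  linarith

theorem logHolderWith_of_le_div {C₀ C₁ b : ℝ} {β : E → ℝ} (hC₀ : 0 ≤ C₀)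
    (hlocal : ∀ x y, dist x y ≤ 1 / 2 → |β x - β y| ≤ C₀ / -Real.log (dist x y))
    (hdecay : ∀ x, |β x - b| ≤ C₁ / Real.log (Real.exp 1 + ‖x‖)) :
    LogHolderWith (C₀ + 2 * C₁) b β := by
  have hlog (x : E) := one_le_log_exp_one_add (norm_nonneg x)
  have hdecay' (x : E) : |β x - b| * Real.log (Real.exp 1 + ‖x‖) ≤ C₁ :=
    (le_div_iff₀ (by linarith [hlog x])).1 (hdecay x)
  have hbound (x : E) : |β x - b| ≤ C₁ :=
    (le_mul_of_one_le_right (abs_nonneg _) (hlog x)).trans (hdecay' x)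
  have hC₁ : 0 ≤ C₁ := (abs_nonneg _).trans (hbound 0)
  refine ⟨fun x y => ?_, fun x => (hdecay' x).trans (by linarith)⟩
  rcases le_or_gt (dist x y) (1 / 2) with hnear | hfar
  · rcases (dist_nonneg (x := x) (y := y)).eq_or_lt with hzero | hpos
    · rw [← hzero, Real.log_zero, neg_zero, mul_zero]
      positivity
    · have hneg : Real.log (dist x y) < 0 := Real.log_neg hpos (by linarith)
      have := (le_div_iff₀ (by linarith)).1 (hlocal x y hnear)
      linarith
  · have hlog_le : -Real.log (dist x y) ≤ 1 := by
      have := Real.log_le_log (by norm_num) hfar.le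
      rw [one_div, Real.log_inv] at this
      linarith [Real.log_two_lt_d9]
    have hosc : |β x - β y| ≤ 2 * C₁ := by
      have := abs_sub_le (β x) b (β y)
      rw [abs_sub_comm b] at this
      linarith [hbound x, hbound y]
    linarith [mul_le_of_le_one_right (abs_nonneg (β x - β y)) hlog_le]

namespace LogHolderWith

variable {C b : ℝ} {β : E → ℝ}

lemma const_nonneg (h : LogHolderWith C b β) : 0 ≤ C := by
  simpa using h.abs_sub_mul_neg_log_dist_le 0 0

lemma const_sub (h : LogHolderWith C b β) (s : ℝ) :
    LogHolderWith C (s - b) fun x => s - β x where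
  abs_sub_mul_neg_log_dist_le x y := by
    rw [_root_.sub_sub_sub_cancel_left, abs_sub_comm]
    exact h.abs_sub_mul_neg_log_dist_le x y
  abs_sub_mul_log_le x := by
    rw [_root_.sub_sub_sub_cancel_left, abs_sub_comm]
    exact h.abs_sub_mul_log_le x

lemma abs_sub_le_div (h : LogHolderWith C b β) (x : E) :
    |β x - b| ≤ C / Real.log (Real.exp 1 + ‖x‖) :=
  (le_div_iff₀ (by linarith [one_le_log_exp_one_add (norm_nonneg x)])).2 (h.abs_sub_mul_log_le x)

lemma abs_le (h : LogHolderWith C b β) (x : E) : |β x| ≤ |b| + C := by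
  have hsub : |β x - b| ≤ C := (h.abs_sub_le_div x).trans
    (div_le_self h.const_nonneg (one_le_log_exp_one_add (norm_nonneg x)))
  linarith [abs_sub_abs_le_abs_sub (β x) b]

lemma abs_sub_mul_neg_log_le (h : LogHolderWith C b β) {x y : E} {r : ℝ}
    (hxy : dist x y ≤ r) : |β x - β y| * -Real.log r ≤ C := by
  rcases eq_or_ne x y with rfl | hne
  · simpa using h.const_nonneg
  · have hlog := Real.log_le_log (dist_pos.2 hne) hxy
    exact le_trans (by gcongr) (h.abs_sub_mul_neg_log_dist_le x y)

protected lemma continuous (h : LogHolderWith C b β) : Continuous β := by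
  refine Metric.continuous_iff.2 fun x ε hε => ?_
  have hC := h.const_nonneg
  refine ⟨Real.exp (-((C + 1) / ε)), Real.exp_pos _, fun y hy => ?_⟩
  have hle := h.abs_sub_mul_neg_log_le hy.le
  rw [Real.log_exp, neg_neg, ← mul_div_assoc, div_le_iff₀ hε] at hle
  rw [Real.dist_eq]
  nlinarith [abs_nonneg (β y - β x)]

lemma tendsto_cobounded (h : LogHolderWith C b β) :
    Filter.Tendsto β (Bornology.cobounded E) (nhds b) := by
  rw [tendsto_iff_dist_tendsto_zero]
  refine squeeze_zero (fun _ => dist_nonneg) h.abs_sub_le_div ?_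
  exact tendsto_const_nhds.div_atTop (Real.tendsto_log_atTop.comp
    (Filter.tendsto_atTop_add_const_left _ _ tendsto_norm_cobounded_atTop))

lemma inv_of_one_le [NormedSpace ℝ E] [Nontrivial E] (h : LogHolderWith C b β)
    (hβ : ∀ x, 1 ≤ β x) : LogHolderWith C b⁻¹ fun x => (β x)⁻¹ := by
  have := NormedSpace.cobounded_neBot ℝ E
  have hb : 1 ≤ b := ge_of_tendsto' h.tendsto_cobounded hβ
  have hinv {s t : ℝ} (hs : 1 ≤ s) (ht : 1 ≤ t) : |s⁻¹ - t⁻¹| ≤ |s - t| := by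
    rw [inv_sub_inv (by positivity) (by positivity), abs_div, abs_sub_comm]
    exact div_le_self (abs_nonneg _) ((one_le_mul_of_one_le_of_one_le hs ht).trans (le_abs_self _))
  refine ⟨fun x y => ?_, fun x => ?_⟩
  · rcases le_total (Real.log (dist x y)) 0 with hlog | hlog
    · exact (mul_le_mul_of_nonneg_right (hinv (hβ x) (hβ y)) (neg_nonneg.2 hlog)).trans
        (h.abs_sub_mul_neg_log_dist_le x y)
    · exact (mul_nonpos_of_nonneg_of_nonpos (abs_nonneg _) (neg_nonpos.2 hlog)).trans h.const_nonneg
  · have := one_le_log_exp_one_add (norm_nonneg x)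
    exact (mul_le_mul_of_nonneg_right (hinv (hβ x) hb) (by linarith)).trans
      (h.abs_sub_mul_log_le x)

theorem rpow_le_of_dist_le (h : LogHolderWith C b β) {x y : E} {r : ℝ} (hr : 0 < r)
    (hr1 : r ≤ 1) (hxy : dist x y ≤ r) : r ^ β x ≤ Real.exp C * r ^ β y := by
  rw [Real.rpow_def_of_pos hr, Real.rpow_def_of_pos hr, ← Real.exp_add, Real.exp_le_exp]
  have hsub : (β y - β x) * -Real.log r ≤ |β x - β y| * -Real.log r := by
    rw [abs_sub_comm]
    exact mul_le_mul_of_nonneg_right (le_abs_self _) (neg_nonneg.2 (Real.log_nonpos hr.le hr1))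
  linarith [h.abs_sub_mul_neg_log_le hxy]

theorem rpow_le_of_le_pow (h : LogHolderWith C b β) {x : E} {V : ℝ} (hV : 1 ≤ V) {m : ℕ}
    (hVx : V ≤ (Real.exp 1 + ‖x‖) ^ m) : V ^ β x ≤ Real.exp (m * C) * V ^ b := by
  have hV0 : 0 < V := by linarith
  rw [Real.rpow_def_of_pos hV0, Real.rpow_def_of_pos hV0, ← Real.exp_add, Real.exp_le_exp]
  have hlog : Real.log V ≤ m * Real.log (Real.exp 1 + ‖x‖) := by
    simpa only [Real.log_pow] using Real.log_le_log hV0 hVx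
  have hdecay : (β x - b) * Real.log V ≤ m * C := calc
    (β x - b) * Real.log V ≤ |β x - b| * Real.log V :=
      mul_le_mul_of_nonneg_right (le_abs_self _) (Real.log_nonneg hV)
    _ ≤ |β x - b| * (m * Real.log (Real.exp 1 + ‖x‖)) := by gcongr
    _ = m * (|β x - b| * Real.log (Real.exp 1 + ‖x‖)) := by ring
    _ ≤ m * C := by gcongr; exact h.abs_sub_mul_log_le x
  linarith

end LogHolderWith

end LogHolder

lemma rpow_neg_inv_le_inv {U η β : ℝ} (hU : 0 < U) (hβ : 0 < β) (h : U ^ β ≤ η) :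
    η ^ (-β⁻¹) ≤ U⁻¹ := calc
  η ^ (-β⁻¹) ≤ (U ^ β) ^ (-β⁻¹) :=
    Real.rpow_le_rpow_of_nonpos (by positivity) h (by simpa using hβ.le)
  _ = U⁻¹ := by
    rw [← Real.rpow_mul hU.le, mul_neg, mul_inv_cancel₀ hβ.ne', Real.rpow_neg_one]

lemma inv_le_rpow_neg_inv {U η β : ℝ} (hU : 0 < U) (hβ : β < 0) (h : U ^ β ≤ η) :
    U⁻¹ ≤ η ^ (-β⁻¹) := calc
  U⁻¹ = (U ^ β) ^ (-β⁻¹) := by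
    rw [← Real.rpow_mul hU.le, mul_neg, mul_inv_cancel₀ hβ.ne, Real.rpow_neg_one]
  _ ≤ η ^ (-β⁻¹) := Real.rpow_le_rpow (by positivity) h (neg_nonneg.2 (inv_nonpos.2 hβ.le))

lemma two_mul_rpow_neg_inv_le {η η₀ β M : ℝ} (hη : 0 < η) (hβ : β < 0) (hM : -β ≤ M)
    (h : 2 ^ M * η ≤ η₀) : 2 * η ^ (-β⁻¹) ≤ η₀ ^ (-β⁻¹) := by
  have hexp : 1 ≤ M * -β⁻¹ := by
    rwa [← inv_neg, ← div_eq_mul_inv, one_le_div (by linarith)]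
  calc 2 * η ^ (-β⁻¹) ≤ 2 ^ (M * -β⁻¹) * η ^ (-β⁻¹) := by
        gcongr
        exact Real.self_le_rpow_of_one_le one_le_two hexp
    _ = (2 ^ M * η) ^ (-β⁻¹) := by
        rw [Real.mul_rpow (by positivity) hη.le, Real.rpow_mul two_pos.le]
    _ ≤ η₀ ^ (-β⁻¹) :=
        Real.rpow_le_rpow (by positivity) h (neg_nonneg.2 (inv_nonpos.2 hβ.le))

section LuxemburgNorm

variable {n : ℕ} {q f : (Fin n → ℝ) → ℝ} {Q : Set (Fin n → ℝ)} {η : ℝ}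

/-- The modular of `f / η` for the variable exponent `q`: `luxNorm q f` is the infimum of the
`η > 0` at which it is at most `1`. -/
noncomputable def scaledModular (q f : (Fin n → ℝ) → ℝ) (η : ℝ) : ℝ≥0∞ :=
  ∫⁻ x, ENNReal.ofReal ((|f x| / η) ^ q x)

lemma luxNorm_nonneg_s12 : 0 ≤ luxNorm q f :=
  Real.sInf_nonneg fun _ h => h.1.le

lemma luxNorm_le (hη : 0 < η) (h : scaledModular q f η ≤ 1) : luxNorm q f ≤ η :=
  csInf_le ⟨0, fun _ h => h.1.le⟩ ⟨hη, h⟩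

/-- One may assume that an admissible `η` exists, since the infimum of the empty set is `0`. -/
lemma luxNorm_le_of_forall_admissible {B : ℝ} (hB : 0 ≤ B)
    (h : ∀ η, 0 < η → scaledModular q f η ≤ 1 → luxNorm q f ≤ B) : luxNorm q f ≤ B := by
  rcases eq_empty_or_nonempty {η : ℝ | 0 < η ∧ scaledModular q f η ≤ 1} with hempty | ⟨η, hη, hmod⟩
  · rwa [show luxNorm q f = 0 from (congrArg sInf hempty).trans Real.sInf_empty]
  · exact h η hη hmod

-- The zero set of `q` counts in full, inside and outside of `Q`, because `0 ^ 0 = 1`.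
theorem scaledModular_indicator (hq : Measurable q) (hQ : MeasurableSet Q) (hη : 0 < η) :
    scaledModular q (Q.indicator fun _ => 1) η =
      volume {x | q x = 0} + ∫⁻ x in Q \ {x | q x = 0}, ENNReal.ofReal (η ^ (-q x)) := by
  have hzero : MeasurableSet {x | q x = 0} := measurableSet_eq_fun hq measurable_const
  rw [← lintegral_indicator_one hzero, ← lintegral_indicator (hQ.diff hzero),
    ← lintegral_add_left (measurable_one.indicator hzero)]
  refine lintegral_congr fun x => ?_
  have hinv : (1 / η) ^ q x = η ^ (-q x) := by
    rw [one_div, Real.inv_rpow hη.le, Real.rpow_neg hη.le]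
  by_cases hx : x ∈ Q <;> by_cases hqx : q x = 0 <;> simp [hx, hqx, ← hinv]

theorem luxNorm_indicator_eq_zero (hq : Measurable q) (hQ : MeasurableSet Q)
    (hzero : 1 ≤ volume {x | q x = 0}) : luxNorm q (Q.indicator fun _ => 1) = 0 := by
  refine le_antisymm (luxNorm_le_of_forall_admissible le_rfl fun η₀ hη₀ hmod => ?_) luxNorm_nonneg_s12
  rw [scaledModular_indicator hq hQ hη₀] at hmod
  have hint : ∫⁻ x in Q \ {x | q x = 0}, ENNReal.ofReal (η₀ ^ (-q x)) = 0 := by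
    have : 1 + ∫⁻ x in Q \ {x | q x = 0}, ENNReal.ofReal (η₀ ^ (-q x)) ≤ 1 + 0 :=
      (add_le_add_left hzero _).trans (by simpa using hmod)
    simpa using (ENNReal.add_le_add_iff_left ENNReal.one_ne_top).1 this
  have hnull : volume (Q \ {x | q x = 0}) = 0 := by
    have hsupp : Function.support (fun x => ENNReal.ofReal (η₀ ^ (-q x))) = univ :=
      eq_univ_of_forall fun x => by simpa using Real.rpow_pos_of_pos hη₀ _
    have := (setLIntegral_pos_iff (μ := volume) (s := Q \ {x | q x = 0})
      (f := fun x => ENNReal.ofReal (η₀ ^ (-q x))) (by fun_prop)).not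
    simpa [hint, hsupp] using this
  refine le_of_forall_pos_le_add fun η hη => (luxNorm_le hη ?_).trans (zero_add η).ge
  rw [scaledModular_indicator hq hQ hη, setLIntegral_measure_zero _ _ hnull, add_zero]
  exact le_self_add.trans hmod

end LuxemburgNorm

section NormOfIndicator

variable {n : ℕ} {β : (Fin n → ℝ) → ℝ} {M : ℝ}

theorem setLIntegral_rpow_neg_inv_le (hβ : Measurable β) (hM : ∀ x, |β x| ≤ M)
    {Q : Set (Fin n → ℝ)} (hQ : MeasurableSet Q) {η η₀ : ℝ} (hη : 0 < η) (hle : 2 ^ M * η ≤ η₀) :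
    ∫⁻ x in Q \ {x | β x = 0}, ENNReal.ofReal (η ^ (-(β x)⁻¹)) ≤
      (∫⁻ x in Q ∩ {x | 0 < β x}, ENNReal.ofReal (η ^ (-(β x)⁻¹))) +
        (∫⁻ x in Q \ {x | β x = 0}, ENNReal.ofReal (η₀ ^ (-(β x)⁻¹))) / 2 := by
  have hpos : MeasurableSet {x | 0 < β x} := measurableSet_lt measurable_const hβ
  have hzero : MeasurableSet {x | β x = 0} := measurableSet_eq_fun hβ measurable_const
  have hpoint (x : Fin n → ℝ) (hx : x ∈ Q \ {x | β x = 0}) : ENNReal.ofReal (η ^ (-(β x)⁻¹)) ≤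
      (Q ∩ {x | 0 < β x}).indicator (fun x => ENNReal.ofReal (η ^ (-(β x)⁻¹))) x +
        2⁻¹ * ENNReal.ofReal (η₀ ^ (-(β x)⁻¹)) := by
    rcases lt_or_gt_of_ne hx.2 with hneg | hpos
    · refine le_trans ?_ le_add_self
      rw [← ENNReal.ofReal_ofNat 2, ← ENNReal.ofReal_inv_of_pos two_pos,
        ← ENNReal.ofReal_mul (by positivity)]
      refine ENNReal.ofReal_le_ofReal ?_
      rw [← div_eq_inv_mul, le_div_iff₀' two_pos]
      exact two_mul_rpow_neg_inv_le hη hneg ((neg_le_abs _).trans (hM x)) hle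
    · rw [indicator_of_mem (show x ∈ Q ∩ {x | 0 < β x} from ⟨hx.1, hpos⟩)]
      exact le_self_add
  refine (setLIntegral_mono' (hQ.diff hzero) hpoint).trans ?_
  rw [lintegral_add_right _ (by fun_prop), lintegral_const_mul' _ _ (by simp),
    ← ENNReal.div_eq_inv_mul, ← lintegral_indicator (hQ.inter hpos)]
  gcongr
  exact Measure.restrict_le_self

theorem luxNorm_indicator_le_two_rpow_mul (hβ : Measurable β) (hM : ∀ x, |β x| ≤ M)
    {Q : Set (Fin n → ℝ)} (hQ : MeasurableSet Q) {η : ℝ} (hη : 0 < η)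
    (hpos : ∫⁻ x in Q ∩ {x | 0 < β x}, ENNReal.ofReal (η ^ (-(β x)⁻¹)) ≤
      (1 - volume {x | β x = 0}) / 2) :
    luxNorm (fun x => (β x)⁻¹) (Q.indicator fun _ => 1) ≤ 2 ^ M * η := by
  refine luxNorm_le_of_forall_admissible (by positivity) fun η₀ hη₀ hmod => ?_
  rcases le_or_gt η₀ (2 ^ M * η) with hle | hlt
  · exact (luxNorm_le hη₀ hmod).trans hle
  have hM0 : 0 ≤ M := (abs_nonneg _).trans (hM 0)
  refine (luxNorm_le hη ?_).trans (le_mul_of_one_le_left hη.le (Real.one_le_rpow one_le_two hM0))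
  rw [scaledModular_indicator hβ.fun_inv hQ hη₀] at hmod
  rw [scaledModular_indicator hβ.fun_inv hQ hη]
  simp only [inv_eq_zero] at hmod ⊢
  set Z := {x | β x = 0}
  have hZ : volume Z ≤ 1 := le_self_add.trans hmod
  have hrest : ∫⁻ x in Q \ Z, ENNReal.ofReal (η₀ ^ (-(β x)⁻¹)) ≤ 1 - volume Z :=
    ENNReal.le_sub_of_add_le_left (hZ.trans_lt ENNReal.one_lt_top).ne hmod
  calc volume Z + ∫⁻ x in Q \ Z, ENNReal.ofReal (η ^ (-(β x)⁻¹))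
      ≤ volume Z + ((∫⁻ x in Q ∩ {x | 0 < β x}, ENNReal.ofReal (η ^ (-(β x)⁻¹))) +
          (∫⁻ x in Q \ Z, ENNReal.ofReal (η₀ ^ (-(β x)⁻¹))) / 2) := by
        gcongr
        exact setLIntegral_rpow_neg_inv_le hβ hM hQ hη hlt.le
    _ ≤ volume Z + ((1 - volume Z) / 2 + (1 - volume Z) / 2) := by gcongr
    _ = 1 := by rw [ENNReal.add_halves, add_tsub_cancel_of_le hZ]

theorem exists_luxNorm_indicator_le_mul (hβ : Measurable β) (hM : ∀ x, |β x| ≤ M) {A : ℝ≥0∞}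
    (hA : A ≠ ∞) :
    ∃ K : ℝ, 0 < K ∧ ∀ (Q : Set (Fin n → ℝ)) (η : ℝ), MeasurableSet Q → 0 < η →
      ∫⁻ x in Q ∩ {x | 0 < β x}, ENNReal.ofReal (η ^ (-(β x)⁻¹)) ≤ A →
      luxNorm (fun x => (β x)⁻¹) (Q.indicator fun _ => 1) ≤ K * η := by
  rcases le_or_gt 1 (volume {x | β x = 0}) with hzero | hzero
  · refine ⟨1, one_pos, fun Q η hQ hη _ => ?_⟩
    rw [luxNorm_indicator_eq_zero hβ.fun_inv hQ (by simpa only [inv_eq_zero] using hzero)]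
    positivity
  have hgap : (1 - volume {x | β x = 0}) / 2 ≠ 0 :=
    (ENNReal.half_pos (tsub_pos_of_lt hzero).ne').ne'
  obtain ⟨δ₀, hδ₀, hδ₀A⟩ := ENNReal.exists_nnreal_pos_mul_lt hA hgap
  obtain ⟨δ, hδ, hδ1, hδA⟩ : ∃ δ : ℝ, 0 < δ ∧ δ ≤ 1 ∧
      ENNReal.ofReal δ * A ≤ (1 - volume {x | β x = 0}) / 2 := by
    refine ⟨min δ₀ 1, lt_min hδ₀ one_pos, min_le_right _ _, le_trans ?_ hδ₀A.le⟩
    gcongr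
    exact ENNReal.ofReal_le_of_le_toReal (min_le_left _ _)
  refine ⟨2 ^ M * δ ^ (-M), by positivity, fun Q η hQ hη hint => ?_⟩
  rw [mul_assoc]
  refine luxNorm_indicator_le_two_rpow_mul hβ hM hQ (by positivity) (le_trans ?_ hδA)
  refine le_trans ?_ (mul_le_mul_right hint (ENNReal.ofReal δ))
  rw [← lintegral_const_mul' _ _ ENNReal.ofReal_ne_top]
  refine setLIntegral_mono' (hQ.inter (measurableSet_lt measurable_const hβ)) fun x hx => ?_
  rw [← ENNReal.ofReal_mul hδ.le]
  refine ENNReal.ofReal_le_ofReal ?_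
  rw [Real.mul_rpow (by positivity) hη.le, ← Real.rpow_mul hδ.le, neg_mul_neg]
  gcongr
  refine (Real.rpow_le_rpow_of_exponent_ge hδ hδ1 ?_).trans_eq (Real.rpow_one δ)
  rw [← div_eq_mul_inv, one_le_div hx.2]
  exact (le_abs_self _).trans (hM x)

theorem le_of_scaledModular_indicator_le_one (hβ : Measurable β) {Q R : Set (Fin n → ℝ)}
    (hQ : MeasurableSet Q) (hR : MeasurableSet R) (hRQ : R ⊆ Q) {U B η : ℝ} (hU : 0 < U)
    (hUR : ENNReal.ofReal U < volume R) (hneg : ∀ x ∈ R, β x < 0) (hB : ∀ x ∈ R, U ^ β x ≤ B)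
    (hη : 0 < η) (hmod : scaledModular (fun x => (β x)⁻¹) (Q.indicator fun _ => 1) η ≤ 1) :
    η ≤ B := by
  by_contra! hlt
  rw [scaledModular_indicator hβ.fun_inv hQ hη] at hmod
  have hRZ : R ⊆ Q \ {x | (β x)⁻¹ = 0} := fun x hx => ⟨hRQ hx, inv_ne_zero (hneg x hx).ne⟩
  refine absurd ?_ (not_le.2 hUR)
  rw [← mul_one (ENNReal.ofReal U),
    ← ENNReal.inv_mul_le_iff (ENNReal.ofReal_pos.2 hU).ne' ENNReal.ofReal_ne_top]
  calc (ENNReal.ofReal U)⁻¹ * volume R = ∫⁻ _ in R, ENNReal.ofReal U⁻¹ := by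
        rw [setLIntegral_const, ENNReal.ofReal_inv_of_pos hU]
    _ ≤ ∫⁻ x in R, ENNReal.ofReal (η ^ (-(β x)⁻¹)) := setLIntegral_mono' hR fun x hx =>
        ENNReal.ofReal_le_ofReal
          (inv_le_rpow_neg_inv hU (hneg x hx) ((hB x hx).trans hlt.le))
    _ ≤ ∫⁻ x in Q \ {x | (β x)⁻¹ = 0}, ENNReal.ofReal (η ^ (-(β x)⁻¹)) :=
        lintegral_mono_set hRZ
    _ ≤ 1 := le_add_self.trans hmod

end NormOfIndicator

lemma ofReal_toReal_volume_of_one_le {n : ℕ} {Q : Set (Fin n → ℝ)}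
    (hV : 1 ≤ (volume Q).toReal) : ENNReal.ofReal (volume Q).toReal = volume Q :=
  ENNReal.ofReal_toReal (ENNReal.toReal_pos_iff.1 (zero_lt_one.trans_le hV)).2.ne

lemma exists_half_volume_le_volume_diff_ball {n : ℕ} [NeZero n] {Q : Set (Fin n → ℝ)}
    (hV : 1 ≤ (volume Q).toReal) :
    ∃ ρ : ℝ, ENNReal.ofReal ((volume Q).toReal / 2) ≤ volume (Q \ Metric.ball 0 ρ) ∧
      ∀ x ∉ Metric.ball (0 : Fin n → ℝ) ρ, (volume Q).toReal ≤ (Real.exp 1 + ‖x‖) ^ (2 * n) := by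
  obtain ⟨s, hs, hsn⟩ : ∃ s : ℝ, 0 < s ∧ s ^ n = (volume Q).toReal / 2 :=
    ⟨((volume Q).toReal / 2) ^ (n : ℝ)⁻¹, by positivity,
      Real.rpow_inv_natCast_pow (by positivity) (NeZero.ne n)⟩
  refine ⟨s / 2, le_trans (le_of_eq ?_) le_measure_sdiff, fun x hx => ?_⟩
  · rw [Real.volume_pi_ball _ (by positivity), Fintype.card_fin, mul_div_cancel₀ s two_ne_zero, hsn,
      ← ofReal_toReal_volume_of_one_le hV, ← ENNReal.ofReal_sub _ (by positivity),
      ENNReal.toReal_ofReal (by positivity), _root_.sub_half]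
  · have hnorm : s / 2 ≤ ‖x‖ := by simpa using hx
    calc (volume Q).toReal = 2 * s ^ n := by rw [hsn]; ring
      _ ≤ 2 ^ n * s ^ n := by
          gcongr
          exact le_self_pow₀ one_le_two (NeZero.ne n)
      _ = (2 * s) ^ n := (mul_pow _ _ _).symm
      _ ≤ ((Real.exp 1 + ‖x‖) ^ 2) ^ n := by
          gcongr
          nlinarith [Real.one_le_exp zero_le_one, sq_nonneg (1 - s / 2)]
      _ = (Real.exp 1 + ‖x‖) ^ (2 * n) := (pow_mul _ _ _).symm

section Cube

variable {n : ℕ} {c : Fin n → ℝ} {r : ℝ}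

lemma cube_subset_closedBall (hr : 0 ≤ r) :
    (univ.pi fun i => Icc (c i) (c i + r)) ⊆ Metric.closedBall c r := fun x hx => by
  rw [Metric.mem_closedBall, dist_pi_le_iff hr]
  intro i
  have hi := hx i (mem_univ i)
  rw [Real.dist_eq, abs_le]
  constructor <;> linarith [hi.1, hi.2]

lemma toReal_volume_cube (hr : 0 ≤ r) :
    (volume (univ.pi fun i => Icc (c i) (c i + r))).toReal = r ^ n := by
  rw [pi_univ_Icc, Real.volume_Icc_pi_toReal fun i => le_add_of_nonneg_right hr]
  simp only [add_sub_cancel_left, Finset.prod_const, Finset.card_univ, Fintype.card_fin]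

end Cube

namespace LogHolderWith

variable {n : ℕ} {C b : ℝ} {β : (Fin n → ℝ) → ℝ}

theorem exists_luxNorm_indicator_le_of_subset_closedBall (h : LogHolderWith C b β) :
    ∃ K : ℝ, 0 < K ∧ ∀ (Q : Set (Fin n → ℝ)) (c : Fin n → ℝ) (r : ℝ), MeasurableSet Q →
      0 < r → r ≤ 1 → Q ⊆ Metric.closedBall c r →
      luxNorm (fun x => (β x)⁻¹) (Q.indicator fun _ => 1) ≤ K * (r ^ n) ^ β c := by
  have hβ := h.continuous.measurable
  obtain ⟨K, hK, hle⟩ := exists_luxNorm_indicator_le_mul hβ h.abs_le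
    (A := ENNReal.ofReal (2 ^ n)) ENNReal.ofReal_ne_top
  refine ⟨K * Real.exp C ^ n, by positivity, fun Q c r hQ hr hr1 hQc => ?_⟩
  rw [mul_assoc]
  refine hle Q _ hQ (by positivity) ?_
  have hpoint (x : Fin n → ℝ) (hx : x ∈ Q ∩ {x | 0 < β x}) :
      ENNReal.ofReal ((Real.exp C ^ n * (r ^ n) ^ β c) ^ (-(β x)⁻¹)) ≤
        ENNReal.ofReal (r ^ n)⁻¹ := by
    refine ENNReal.ofReal_le_ofReal (rpow_neg_inv_le_inv (by positivity) hx.2 ?_)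
    rw [← Real.rpow_pow_comm hr.le, ← Real.rpow_pow_comm hr.le, ← mul_pow]
    exact pow_le_pow_left₀ (by positivity) (h.rpow_le_of_dist_le hr hr1 (hQc hx.1)) n
  calc _ ≤ ∫⁻ _ in Q ∩ {x | 0 < β x}, ENNReal.ofReal (r ^ n)⁻¹ :=
        setLIntegral_mono' (hQ.inter (measurableSet_lt measurable_const hβ)) hpoint
    _ = ENNReal.ofReal (r ^ n)⁻¹ * volume (Q ∩ {x | 0 < β x}) := setLIntegral_const _ _
    _ ≤ ENNReal.ofReal (r ^ n)⁻¹ * volume (Metric.closedBall c r) := by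
        gcongr
        exact inter_subset_left.trans hQc
    _ = ENNReal.ofReal (2 ^ n) := by
        rw [Real.volume_pi_closedBall _ hr.le, Fintype.card_fin,
          ← ENNReal.ofReal_mul (by positivity), mul_pow]
        congr 1
        field_simp

lemma rpow_neg_inv_le_inv_add_inv {E : Type*} [NormedAddCommGroup E] {β : E → ℝ}
    (h : LogHolderWith C b β) (hb : 0 ≤ b) {V : ℝ} (hV : 1 ≤ V) {x : E} (hx : 0 < β x) (m : ℕ) :
    (Real.exp (m * C) * V ^ b) ^ (-(β x)⁻¹) ≤ V⁻¹ + ((1 + ‖x‖) ^ m)⁻¹ := by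
  have hU : 1 ≤ min V ((1 + ‖x‖) ^ m) :=
    le_min hV (one_le_pow₀ (by linarith [norm_nonneg x]))
  have hpow : min V ((1 + ‖x‖) ^ m) ≤ (Real.exp 1 + ‖x‖) ^ m :=
    (min_le_right _ _).trans (by gcongr; exact Real.one_le_exp zero_le_one)
  have hle : min V ((1 + ‖x‖) ^ m) ^ β x ≤ Real.exp (m * C) * V ^ b :=
    (h.rpow_le_of_le_pow hU hpow).trans (by gcongr; exact min_le_left _ _)
  refine (rpow_neg_inv_le_inv (zero_lt_one.trans_le hU) hx hle).trans ?_
  rcases min_choice V ((1 + ‖x‖) ^ m) with hmin | hmin <;> rw [hmin]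
  · exact le_add_of_nonneg_right (by positivity)
  · exact le_add_of_nonneg_left (by positivity)

theorem exists_luxNorm_indicator_le_of_limit_nonneg (h : LogHolderWith C b β) (hb : 0 ≤ b) :
    ∃ K : ℝ, 0 < K ∧ ∀ Q : Set (Fin n → ℝ), MeasurableSet Q → 1 ≤ (volume Q).toReal →
      luxNorm (fun x => (β x)⁻¹) (Q.indicator fun _ => 1) ≤ K * (volume Q).toReal ^ b := by
  have hβ := h.continuous.measurable
  have hJ : ∫⁻ x : Fin n → ℝ, ENNReal.ofReal ((1 + ‖x‖) ^ (-((n + 1 : ℕ) : ℝ))) < ∞ :=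
    finite_integral_one_add_norm (by simp)
  obtain ⟨K, hK, hle⟩ := exists_luxNorm_indicator_le_mul hβ h.abs_le
    (ENNReal.add_ne_top.2 ⟨ENNReal.one_ne_top, hJ.ne⟩)
  refine ⟨K * Real.exp ((n + 1 : ℕ) * C), by positivity, fun Q hQ hV => ?_⟩
  set V := (volume Q).toReal
  rw [mul_assoc]
  refine hle Q _ hQ (by positivity) ?_
  have hpoint (x : Fin n → ℝ) (hx : x ∈ Q ∩ {x | 0 < β x}) :
      ENNReal.ofReal ((Real.exp ((n + 1 : ℕ) * C) * V ^ b) ^ (-(β x)⁻¹)) ≤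
        ENNReal.ofReal V⁻¹ + ENNReal.ofReal ((1 + ‖x‖) ^ (-((n + 1 : ℕ) : ℝ))) := by
    rw [Real.rpow_neg (x := 1 + ‖x‖) (by positivity), Real.rpow_natCast,
      ← ENNReal.ofReal_add (by positivity) (by positivity)]
    exact ENNReal.ofReal_le_ofReal (h.rpow_neg_inv_le_inv_add_inv hb hV hx.2 (n + 1))
  have hVQ : ENNReal.ofReal V⁻¹ * volume Q = 1 := by
    rw [← ofReal_toReal_volume_of_one_le hV, ← ENNReal.ofReal_mul (by positivity),
      inv_mul_cancel₀ (by positivity), ENNReal.ofReal_one]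
  refine (setLIntegral_mono' (hQ.inter (measurableSet_lt measurable_const hβ)) hpoint).trans ?_
  rw [lintegral_add_left measurable_const, setLIntegral_const, ← hVQ]
  gcongr
  · exact inter_subset_left
  · exact Measure.restrict_le_self

theorem admissible_le_of_mul_rpow_lt_one [NeZero n] (h : LogHolderWith C b β)
    {Q : Set (Fin n → ℝ)} (hQ : MeasurableSet Q) (hV : 1 ≤ (volume Q).toReal)
    (hlt : Real.exp ((2 * n : ℕ) * C) * (volume Q).toReal ^ b < 1) {η : ℝ} (hη : 0 < η)
    (hmod : scaledModular (fun x => (β x)⁻¹) (Q.indicator fun _ => 1) η ≤ 1) :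
    η ≤ 3 ^ (|b| + C) * (Real.exp ((2 * n : ℕ) * C) * (volume Q).toReal ^ b) := by
  obtain ⟨ρ, hhalf, hfar⟩ := exists_half_volume_le_volume_diff_ball hV
  set V := (volume Q).toReal
  have hdecay (x : Fin n → ℝ) (hx : x ∈ Q \ Metric.ball 0 ρ) :
      V ^ β x ≤ Real.exp ((2 * n : ℕ) * C) * V ^ b :=
    h.rpow_le_of_le_pow hV (hfar x hx.2)
  have hneg (x : Fin n → ℝ) (hx : x ∈ Q \ Metric.ball 0 ρ) : β x < 0 := by
    by_contra! hx0
    linarith [hdecay x hx, Real.one_le_rpow hV hx0]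
  have hthird : ENNReal.ofReal (V / 3) < volume (Q \ Metric.ball 0 ρ) :=
    ((ENNReal.ofReal_lt_ofReal_iff (by positivity)).2 (by linarith)).trans_le hhalf
  refine le_of_scaledModular_indicator_le_one h.continuous.measurable hQ
    (hQ.diff Metric.isOpen_ball.measurableSet) sdiff_subset (by positivity) hthird hneg
    (fun x hx => ?_) hη hmod
  have hthree : (3 : ℝ) ^ (-β x) ≤ 3 ^ (|b| + C) :=
    Real.rpow_le_rpow_of_exponent_le (by norm_num) ((neg_le_abs _).trans (h.abs_le x))
  calc (V / 3) ^ β x = 3 ^ (-β x) * V ^ β x := by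
        rw [Real.div_rpow (by positivity) (by norm_num), Real.rpow_neg (by norm_num),
          div_eq_inv_mul]
    _ ≤ 3 ^ (|b| + C) * (Real.exp ((2 * n : ℕ) * C) * V ^ b) := by gcongr; exact hdecay x hx

theorem exists_luxNorm_indicator_le_of_limit_neg [NeZero n] (h : LogHolderWith C b β)
    (hb : b < 0) :
    ∃ K : ℝ, 0 < K ∧ ∀ Q : Set (Fin n → ℝ), MeasurableSet Q → 1 ≤ (volume Q).toReal →
      luxNorm (fun x => (β x)⁻¹) (Q.indicator fun _ => 1) ≤ K * (volume Q).toReal ^ b := by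
  set D := Real.exp ((2 * n : ℕ) * C)
  obtain ⟨K, hK, hle⟩ := exists_luxNorm_indicator_le_mul h.continuous.measurable h.abs_le
    (A := ENNReal.ofReal (D ^ (-b)⁻¹)) ENNReal.ofReal_ne_top
  refine ⟨(K + 3 ^ (|b| + C)) * D, by positivity, fun Q hQ hV => ?_⟩
  have hVQ := ofReal_toReal_volume_of_one_le hV
  rw [mul_assoc, add_mul]
  rcases le_or_gt 1 (D * (volume Q).toReal ^ b) with hone | hlt
  · have hV_le : (volume Q).toReal ≤ D ^ (-b)⁻¹ := by
      rwa [Real.le_rpow_inv_iff_of_pos (by positivity) (by positivity) (by linarith),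
        Real.rpow_neg (by positivity), inv_le_iff_one_le_mul₀ (by positivity)]
    have hnorm : luxNorm (fun x => (β x)⁻¹) (Q.indicator fun _ => 1) ≤ K * 1 := by
      refine hle Q 1 hQ one_pos ?_
      simp only [Real.one_rpow, ENNReal.ofReal_one, setLIntegral_one]
      exact (measure_mono inter_subset_left).trans
        (hVQ.symm.le.trans (ENNReal.ofReal_le_ofReal hV_le))
    calc _ ≤ K * 1 := hnorm
      _ ≤ K * (D * (volume Q).toReal ^ b) := by gcongr
      _ ≤ _ := le_add_of_nonneg_right (by positivity)
  · refine luxNorm_le_of_forall_admissible (by positivity) fun η hη hmod => ?_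
    exact (luxNorm_le hη hmod).trans (le_add_of_nonneg_of_le (by positivity)
      (h.admissible_le_of_mul_rpow_lt_one hQ hV hlt hη hmod))

theorem exists_luxNorm_indicator_cube_le [NeZero n] (h : LogHolderWith C b β) :
    ∃ K : ℝ, 0 < K ∧ ∀ (c : Fin n → ℝ) (r : ℝ), 0 < r →
      luxNorm (fun x => (β x)⁻¹) ((univ.pi fun i => Icc (c i) (c i + r)).indicator fun _ => 1) ≤
        K * (r ^ n) ^ (if r ≤ 1 then β c else b) := by
  obtain ⟨K₀, hK₀, hsmall⟩ := h.exists_luxNorm_indicator_le_of_subset_closedBall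
  obtain ⟨K₁, hK₁, hlarge⟩ : ∃ K : ℝ, 0 < K ∧ ∀ Q : Set (Fin n → ℝ), MeasurableSet Q →
      1 ≤ (volume Q).toReal →
      luxNorm (fun x => (β x)⁻¹) (Q.indicator fun _ => 1) ≤ K * (volume Q).toReal ^ b := by
    rcases le_or_gt 0 b with hb | hb
    · exact h.exists_luxNorm_indicator_le_of_limit_nonneg hb
    · exact h.exists_luxNorm_indicator_le_of_limit_neg hb
  refine ⟨K₀ + K₁, by positivity, fun c r hr => ?_⟩
  have hcube : MeasurableSet (univ.pi fun i => Icc (c i) (c i + r)) :=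
    MeasurableSet.univ_pi fun _ => measurableSet_Icc
  split_ifs with hr1
  · refine (hsmall _ c r hcube hr hr1 (cube_subset_closedBall hr.le)).trans ?_
    gcongr
    exact le_add_of_nonneg_right hK₁.le
  · have hV := toReal_volume_cube (c := c) hr.le
    refine (hlarge _ hcube (by rw [hV]; exact one_le_pow₀ (not_le.1 hr1).le)).trans ?_
    rw [hV]
    gcongr
    exact le_add_of_nonneg_left hK₀.le

theorem exists_luxNorm_mul_luxNorm_le [NeZero n] (h : LogHolderWith C b β) (s : ℝ) :
    ∃ K : ℝ, 0 < K ∧ ∀ Q : Set (Fin n → ℝ), IsCube Q →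
      luxNorm (fun x => (s - β x)⁻¹) (Q.indicator fun _ => 1) *
        luxNorm (fun x => (β x)⁻¹) (Q.indicator fun _ => 1) ≤ K * (volume Q).toReal ^ s := by
  obtain ⟨K₁, hK₁, h₁⟩ := (h.const_sub s).exists_luxNorm_indicator_cube_le
  obtain ⟨K₂, hK₂, h₂⟩ := h.exists_luxNorm_indicator_cube_le
  refine ⟨K₁ * K₂, by positivity, ?_⟩
  rintro Q ⟨c, r, hr, rfl⟩
  calc _ ≤ K₁ * (r ^ n) ^ (if r ≤ 1 then s - β c else s - b) *
        (K₂ * (r ^ n) ^ (if r ≤ 1 then β c else b)) :=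
        mul_le_mul (h₁ c r hr) (h₂ c r hr) luxNorm_nonneg_s12 (by positivity)
    _ = K₁ * K₂ * (r ^ n) ^ s := by
        rw [mul_mul_mul_comm, ← Real.rpow_add (by positivity)]
        split_ifs <;> rw [sub_add_cancel]
    _ = _ := by rw [toReal_volume_cube hr.le]

end LogHolderWith

theorem const_weight_in_Apq_general {n : ℕ} [NeZero n] {γ : ℝ} {p q : (Fin n → ℝ) → ℝ}
    (hp : ∀ x, 1 < p x) {C b : ℝ} (hlog : LogHolderWith C b fun x => (p x)⁻¹)
    (hpq : ∀ x, 1 / q x = 1 / p x - γ / n) :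
    ∃ C : ℝ, 0 < C ∧ ∀ Q : Set (Fin n → ℝ), IsCube Q →
      luxNorm q (Q.indicator fun _ => (1:ℝ)) *
        luxNorm (fun x => p x / (p x - 1)) (Q.indicator fun _ => (1:ℝ)) ≤
      C * (volume Q).toReal ^ (1 - γ / n) := by
  have hq : q = fun x => (1 - γ / n - (1 - (p x)⁻¹))⁻¹ := by
    funext x
    rw [← inv_inv (q x), ← one_div (q x), hpq x]
    ring
  have hp' : (fun x => p x / (p x - 1)) = fun x => (1 - (p x)⁻¹)⁻¹ := by
    funext x
    have hpx : p x ≠ 0 := by linarith [hp x]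
    rw [← one_div (p x), one_sub_div hpx, inv_div]
  rw [hq, hp']
  exact (hlog.const_sub 1).exists_luxNorm_mul_luxNorm_le (1 - γ / n)

/-- if `0 ≤ γ < n`, `p(·) ∈ 𝒞^{log}(ℝⁿ) ∩ 𝒫(ℝⁿ)` and
`1/q(x) = 1/p(x) − γ/n`, then the constant weight `1` is in `𝒜_{p(·),q(·)}^γ`:
`‖χ_Q‖_{q(·)} ‖χ_Q‖_{p'(·)} ≤ C |Q|^{1−γ/n}` for every cube `Q`. -/
theorem const_weight_in_Apq {n : ℕ} (hn : 0 < n) (γ : ℝ) (hγ0 : 0 ≤ γ) (hγn : γ < n)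
    (p q : (Fin n → ℝ) → ℝ) (hpmeas : Measurable p)
    (pm pp : ℝ) (hpm : 1 < pm) (hpb : ∀ x, pm ≤ p x ∧ p x ≤ pp)
    (Cloc : ℝ) (hCloc : 0 < Cloc)
    (hlog : ∀ x y : Fin n → ℝ, dist x y ≤ 1/2 →
      |p x - p y| ≤ Cloc / (-Real.log (dist x y)))
    (pinf : ℝ) (Cinf : ℝ) (hCinf : 0 < Cinf)
    (hinf : ∀ x : Fin n → ℝ, |p x - pinf| ≤ Cinf / Real.log (Real.exp 1 + ‖x‖))
    (hpq : ∀ x, 1 / q x = 1 / p x - γ / n) :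
    ∃ C : ℝ, 0 < C ∧ ∀ Q : Set (Fin n → ℝ), IsCube Q →
      luxNorm q (Q.indicator fun _ => (1:ℝ)) *
        luxNorm (fun x => p x / (p x - 1)) (Q.indicator fun _ => (1:ℝ)) ≤
      C * (volume Q).toReal ^ (1 - γ / n) := by
  have : NeZero n := ⟨hn.ne'⟩
  have hp (x : Fin n → ℝ) : 1 < p x := hpm.trans_le (hpb x).1
  exact const_weight_in_Apq_general hp
    ((logHolderWith_of_le_div hCloc.le hlog hinf).inv_of_one_le fun x => (hp x).le) hpq
end
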